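/- For an integer k ≥ 1, let n = 2k and consider the continued fraction of length 8k whose entry sequence consists of k copies of the block (1, 2, −1, 2) followed by k copies of the block (1, −2, 1, 2). Its denominator is nonzero and its value equals n + 1/(2n) = (2n² + 1)/(2n). -/

import Mathlib

/-!
The block `(1, 2, -1, 2)` has matrix `-[[1, 2], [0, 1]]` and the block `(1, -2, 1, 2)` has matrix
`-[[1, 0], [4, 1]]`. Their powers are unipotent up to the sign `(-1) ^ k`, and the two signs cancel
in the product, which is `[[1, 2k], [0, 1]] * [[1, 0], [4k, 1]] = [[8k² + 1, 2k], [4k, 1]]`. With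
`n = 2k` its first column is `(2n² + 1, 2n)`.
-/

open Matrix

def cfMat (a : ℤ) : Matrix (Fin 2) (Fin 2) ℤ := !![a, 1; 1, 0]

def cfProd (l : List ℤ) : Matrix (Fin 2) (Fin 2) ℤ := (l.map cfMat).prod

def cfNum (l : List ℤ) : ℤ := cfProd l 0 0

def cfDen (l : List ℤ) : ℤ := cfProd l 1 0

theorem cfProd_append (l m : List ℤ) : cfProd (l ++ m) = cfProd l * cfProd m := by
  simp [cfProd]

theorem cfProd_upper (k : ℕ) :
    cfProd (List.replicate k ([1, 2, -1, 2] : List ℤ)).flatten =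
      (-1 : ℤ) ^ k • !![1, 2 * (k : ℤ); 0, 1] := by
  induction k with
  | zero => simp [cfProd, Matrix.one_fin_two]
  | succ k ih =>
    have h : cfProd [1, 2, -1, 2] = !![-1, -2; 0, -1] := by
      simp [cfProd, cfMat]
    rw [List.replicate_succ, List.flatten_cons, cfProd_append, ih, h]
    ext i j
    fin_cases i <;> fin_cases j <;> simp [Matrix.mul_apply, Fin.sum_univ_two] <;> ring

theorem cfProd_lower (k : ℕ) :
    cfProd (List.replicate k ([1, -2, 1, 2] : List ℤ)).flatten =
      (-1 : ℤ) ^ k • !![1, 0; 4 * (k : ℤ), 1] := by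
  induction k with
  | zero => simp [cfProd, Matrix.one_fin_two]
  | succ k ih =>
    have h : cfProd [1, -2, 1, 2] = !![-1, 0; -4, -1] := by
      simp [cfProd, cfMat]
    rw [List.replicate_succ, List.flatten_cons, cfProd_append, ih, h]
    ext i j
    fin_cases i <;> fin_cases j <;> simp [Matrix.mul_apply, Fin.sum_univ_two] <;> ring

theorem stmt14 (k : ℕ) (hk : 1 ≤ k) (n : ℕ) (hn : n = 2 * k)
    (l : List ℤ)
    (hl : l = (List.replicate k ([1, 2, -1, 2] : List ℤ)).flatten ++
              (List.replicate k ([1, -2, 1, 2] : List ℤ)).flatten) :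
    cfDen l ≠ 0 ∧
      (cfNum l : ℚ) / (cfDen l : ℚ) = (2 * (n : ℚ) ^ 2 + 1) / (2 * n) := by
  have hs : (-1 : ℤ) ^ k * (-1) ^ k = 1 := by
    rw [← mul_pow]; simp
  have hM : cfProd l = !![8 * (k : ℤ) ^ 2 + 1, 2 * (k : ℤ); 4 * (k : ℤ), 1] := by
    rw [hl, cfProd_append, cfProd_upper, cfProd_lower, Matrix.smul_mul, Matrix.mul_smul,
      smul_smul, hs, one_smul]
    ext i j
    fin_cases i <;> fin_cases j <;> simp [Matrix.mul_apply, Fin.sum_univ_two] <;> ring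
  have hnum : cfNum l = 8 * (k : ℤ) ^ 2 + 1 := by simp [cfNum, hM]
  have hden : cfDen l = 4 * (k : ℤ) := by simp [cfDen, hM]
  rw [hnum, hden, hn]
  refine ⟨by omega, ?_⟩
  push_cast
  ring
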